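/- Let n ≥ 2, −∞ < μ < 1/4 and 1 < p < p_c := 1 + 2/(n−2+α₊). Then there exist constants 0 < c₁ < c₂ and a positive function v, twice continuously differentiable on (0,1) and continuous on [0,1], satisfying (1−t²)v''(t) − (n−1)t v'(t) + (μ/t²)v(t) + Λ(−2/(p−1))v(t) = v(t)^p for all t ∈ (0,1), and c₁ t^{α₊} < v(t) < c₂ t^{α₊} for all t ∈ (0,1]. -/

import Mathlib

open Real Set

noncomputable def lap {n : ℕ} (u : EuclideanSpace ℝ (Fin n) → ℝ)
    (x : EuclideanSpace ℝ (Fin n)) : ℝ :=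
  ∑ i : Fin n, iteratedFDeriv ℝ 2 u x ![EuclideanSpace.single i 1, EuclideanSpace.single i 1]

noncomputable def x1 {n : ℕ} (x : EuclideanSpace ℝ (Fin n)) : ℝ :=
  if h : 0 < n then x ⟨0, h⟩ else 0

def halfSpace (n : ℕ) : Set (EuclideanSpace ℝ (Fin n)) := {x | 0 < x1 x}

noncomputable def aPlus (μ : ℝ) : ℝ := 1 / 2 + Real.sqrt (1 / 4 - μ)

noncomputable def aMinus (μ : ℝ) : ℝ := 1 / 2 - Real.sqrt (1 / 4 - μ)

noncomputable def Lam (n : ℕ) (s : ℝ) : ℝ := s * (s + n - 2)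

/-!
With `Λ = α (α + d - 2) + κ` and `κ > 0`, the functions `ε t^α` and `M t^α exp (-κ t²)` are a sub-
and a supersolution for small `ε` and large `M`. Dividing by `ψ = t^α (1 - t²)^(-m)`, where `m` is
large, turns the equation into `-(ω ψ² y')' = h(t, y)` with `h` nondecreasing in `y` between the two
barriers. The operator on the left has an explicit inverse, an iterated integral with positive
kernel, so a solution is a fixed point of a monotone self-map of an order interval. Taking lower
integrals, this map acts on arbitrary functions, Knaster-Tarski applies, and the regularity of the
fixed point is that of an iterated integral.

At the singular endpoint `t = 1` a bounded solution `v` has a limit: for large `c`, the function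
`Z = v - c t²` makes `(1 - t²)^((d - 1) / 2) Z'` nondecreasing near `1`, so that `Z` is eventually
monotone.
-/

section FixedPoint

theorem exists_fixedPoint_of_monotone_between {ι β : Type*} [ConditionallyCompleteLattice β]
    {s : Set ι} {T : (ι → β) → ι → β} {a b : ι → β} (hab : ∀ i ∈ s, a i ≤ b i)
    (hT : ∀ x y : ι → β, (∀ i ∈ s, a i ≤ x i) → (∀ i ∈ s, x i ≤ y i) → (∀ i ∈ s, y i ≤ b i) →
      ∀ i ∈ s, T x i ≤ T y i)
    (ha : ∀ i ∈ s, a i ≤ T a i) (hb : ∀ i ∈ s, T b i ≤ b i) :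
    ∃ x : ι → β, ∀ i ∈ s, x i ∈ Icc (a i) (b i) ∧ T x i = x i := by
  have : ∀ i : s, Fact (a i ≤ b i) := fun i => ⟨hab i i.2⟩
  let ext (x : ∀ i : s, Icc (a i) (b i)) : ι → β := Function.extend (↑) (fun i : s => (x i : β)) a
  have ext_apply (x) {i} (hi : i ∈ s) : ext x i = x ⟨i, hi⟩ :=
    Subtype.val_injective.extend_apply _ _ (⟨i, hi⟩ : s)
  have ext_mem (x) (i) (hi : i ∈ s) : ext x i ∈ Icc (a i) (b i) := ext_apply x hi ▸ (x ⟨i, hi⟩).2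
  let f : (∀ i : s, Icc (a i) (b i)) →o ∀ i : s, Icc (a i) (b i) :=
    { toFun := fun x i => ⟨T (ext x) i,
        (ha i i.2).trans (hT a (ext x) (fun _ _ => le_rfl) (fun i hi => (ext_mem x i hi).1)
          (fun i hi => (ext_mem x i hi).2) i i.2),
        (hT (ext x) b (fun i hi => (ext_mem x i hi).1) (fun i hi => (ext_mem x i hi).2)
          (fun _ _ => le_rfl) i i.2).trans (hb i i.2)⟩
      monotone' := fun x y hxy i => hT (ext x) (ext y) (fun i hi => (ext_mem x i hi).1)
        (fun i hi => by rw [ext_apply _ hi, ext_apply _ hi]; exact hxy ⟨i, hi⟩)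
        (fun i hi => (ext_mem y i hi).2) i i.2 }
  refine ⟨ext f.lfp, fun i hi => ⟨ext_mem _ i hi, ?_⟩⟩
  rw [ext_apply _ hi]
  exact congrArg (fun x : ∀ i : s, Icc (a i) (b i) => (x ⟨i, hi⟩ : β)) f.map_lfp

end FixedPoint

section Primitive

open MeasureTheory ENNReal

theorem lintegral_Ioo_ofReal_deriv {F F' : ℝ → ℝ} {a b : ℝ} (hab : a ≤ b)
    (hF : ContinuousOn F (Icc a b)) (hF' : ∀ x ∈ Ioo a b, HasDerivAt F (F' x) x)
    (hpos : ∀ x ∈ Ioo a b, 0 ≤ F' x) :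
    ∫⁻ x in Ioo a b, ENNReal.ofReal (F' x) = ENNReal.ofReal (F b - F a) := by
  have hint : IntegrableOn F' (Ioc a b) := intervalIntegral.integrableOn_deriv_of_nonneg hF hF' hpos
  rw [← intervalIntegral.integral_eq_sub_of_hasDerivAt_of_le hab hF hF'
      ((intervalIntegrable_iff_integrableOn_Ioc_of_le hab).2 hint),
    intervalIntegral.integral_of_le hab, integral_Ioc_eq_integral_Ioo,
    ofReal_integral_eq_lintegral_ofReal (hint.mono_set Ioo_subset_Ioc_self)
      ((ae_restrict_iff' measurableSet_Ioo).2 (.of_forall hpos))]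

variable {a b t : ℝ}

theorem continuousOn_toReal_lintegral_Ioo_right {f : ℝ → ℝ≥0∞}
    (hf : AEMeasurable f (volume.restrict (Ioo a b)))
    (hfin : ∀ t ∈ Ioo a b, ∫⁻ x in Ioo t b, f x ≠ ∞) :
    ContinuousOn (fun t => (∫⁻ x in Ioo t b, f x).toReal) (Ioo a b) := by
  intro t ht
  obtain ⟨c, hac, hct⟩ := exists_between ht.1
  have hcb : c < b := hct.trans ht.2
  have hmeas (u) (hu : u ∈ Icc c b) : AEMeasurable f (volume.restrict (Ioo u b)) :=
    hf.mono_measure (Measure.restrict_mono (Ioo_subset_Ioo_left (hac.le.trans hu.1)) le_rfl)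
  have hint : IntegrableOn (fun x => (f x).toReal) (uIcc c b) := by
    rw [uIcc_of_le hcb.le, integrableOn_Icc_iff_integrableOn_Ioo]
    exact integrable_toReal_of_lintegral_ne_top (hmeas c ⟨le_rfl, hcb.le⟩) (hfin c ⟨hac, hcb⟩)
  have hcont := intervalIntegral.continuousOn_primitive_interval_left hint
  rw [uIcc_of_le hcb.le] at hcont
  refine ((hcont.congr fun u hu => ?_).continuousAt (Icc_mem_nhds hct ht.2)).continuousWithinAt
  have hfin_u : ∫⁻ x in Ioo u b, f x ≠ ∞ :=
    ((lintegral_mono_set (Ioo_subset_Ioo_left hu.1)).trans_lt (hfin c ⟨hac, hcb⟩).lt_top).ne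
  rw [intervalIntegral.integral_of_le hu.2, integral_Ioc_eq_integral_Ioo,
    integral_toReal (hmeas u hu) (ae_lt_top' (hmeas u hu) hfin_u)]

theorem toReal_lintegral_Ioo_ofReal {g : ℝ → ℝ} (hab : a ≤ b) (hg : ContinuousOn g (Ioo a b))
    (hg0 : ∀ x ∈ Ioo a b, 0 ≤ g x) :
    (∫⁻ x in Ioo a b, ENNReal.ofReal (g x)).toReal = ∫ x in a..b, g x := by
  rw [intervalIntegral.integral_of_le hab, integral_Ioc_eq_integral_Ioo,
    integral_eq_lintegral_of_nonneg_ae ((ae_restrict_iff' measurableSet_Ioo).2 (.of_forall hg0))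
      (hg.aestronglyMeasurable measurableSet_Ioo)]

theorem intervalIntegrable_of_lintegral_Ioo_ofReal_ne_top {g : ℝ → ℝ} (hab : a ≤ b)
    (hg : ContinuousOn g (Ioo a b)) (hg0 : ∀ x ∈ Ioo a b, 0 ≤ g x)
    (hfin : ∫⁻ x in Ioo a b, ENNReal.ofReal (g x) ≠ ∞) : IntervalIntegrable g volume a b := by
  rw [intervalIntegrable_iff_integrableOn_Ioo_of_le hab]
  exact (lintegral_ofReal_ne_top_iff_integrable (hg.aestronglyMeasurable measurableSet_Ioo)
    ((ae_restrict_iff' measurableSet_Ioo).2 (.of_forall hg0))).1 hfin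

theorem hasDerivAt_toReal_lintegral_Ioo_left {g : ℝ → ℝ} (hg : ContinuousOn g (Ioo a b))
    (hg0 : ∀ x ∈ Ioo a b, 0 ≤ g x)
    (hfin : ∀ t ∈ Ioo a b, ∫⁻ x in Ioo a t, ENNReal.ofReal (g x) ≠ ∞) (ht : t ∈ Ioo a b) :
    HasDerivAt (fun t => (∫⁻ x in Ioo a t, ENNReal.ofReal (g x)).toReal) (g t) t := by
  have hsub {s} (hs : s ∈ Ioo a b) : Ioo a s ⊆ Ioo a b := Ioo_subset_Ioo_right hs.2.le
  have hint := intervalIntegrable_of_lintegral_Ioo_ofReal_ne_top ht.1.le (hg.mono (hsub ht))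
    (fun x hx => hg0 x (hsub ht hx)) (hfin t ht)
  refine (intervalIntegral.integral_hasDerivAt_right hint
    (hg.stronglyMeasurableAtFilter isOpen_Ioo t ht)
    (hg.continuousAt (Ioo_mem_nhds ht.1 ht.2))).congr_of_eventuallyEq ?_
  filter_upwards [Ioo_mem_nhds ht.1 ht.2] with s hs
  exact toReal_lintegral_Ioo_ofReal hs.1.le (hg.mono (hsub hs)) fun x hx => hg0 x (hsub hs hx)

theorem hasDerivAt_toReal_lintegral_Ioo_right {g : ℝ → ℝ} (hg : ContinuousOn g (Ioo a b))
    (hg0 : ∀ x ∈ Ioo a b, 0 ≤ g x)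
    (hfin : ∀ t ∈ Ioo a b, ∫⁻ x in Ioo t b, ENNReal.ofReal (g x) ≠ ∞) (ht : t ∈ Ioo a b) :
    HasDerivAt (fun t => (∫⁻ x in Ioo t b, ENNReal.ofReal (g x)).toReal) (-g t) t := by
  have hsub {s} (hs : s ∈ Ioo a b) : Ioo s b ⊆ Ioo a b := Ioo_subset_Ioo_left hs.1.le
  have hint := intervalIntegrable_of_lintegral_Ioo_ofReal_ne_top ht.2.le (hg.mono (hsub ht))
    (fun x hx => hg0 x (hsub ht hx)) (hfin t ht)
  refine (intervalIntegral.integral_hasDerivAt_left hint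
    (hg.stronglyMeasurableAtFilter isOpen_Ioo t ht)
    (hg.continuousAt (Ioo_mem_nhds ht.1 ht.2))).congr_of_eventuallyEq ?_
  filter_upwards [Ioo_mem_nhds ht.1 ht.2] with s hs
  exact toReal_lintegral_Ioo_ofReal hs.2.le (hg.mono (hsub hs)) fun x hx => hg0 x (hsub hs hx)

end Primitive

section GreenOp

open MeasureTheory ENNReal

/-- The solution operator `f ↦ y` of `-(P y')' = f` on `(a, b)` with `P y' = 0` at `a` and `y = 0`
at `b`. Its values are lower integrals, so that it is defined and monotone on all functions,
measurable or not. -/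
noncomputable def greenOp (a b : ℝ) (P : ℝ → ℝ) (f : ℝ → ℝ≥0∞) (t : ℝ) : ℝ≥0∞ :=
  ∫⁻ s in Ioo t b, (∫⁻ r in Ioo a s, f r) / ENNReal.ofReal (P s)

variable {a b t : ℝ} {P : ℝ → ℝ}

theorem greenOp_mono {f g : ℝ → ℝ≥0∞} (hfg : ∀ r ∈ Ioo a b, f r ≤ g r) :
    greenOp a b P f t ≤ greenOp a b P g t :=
  setLIntegral_mono' measurableSet_Ioo fun _ hs => ENNReal.div_le_div_right
    (setLIntegral_mono' measurableSet_Ioo fun r hr => hfg r ⟨hr.1, hr.2.trans hs.2⟩) _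

theorem greenOp_ofReal {y q f : ℝ → ℝ} (hP : ∀ t ∈ Ioo a b, 0 < P t)
    (hy : ContinuousOn y (Icc a b)) (hyb : y b = 0)
    (hy' : ∀ t ∈ Ioo a b, HasDerivAt y (-(q t / P t)) t)
    (hq : ContinuousOn q (Ico a b)) (hqa : q a = 0)
    (hq' : ∀ t ∈ Ioo a b, HasDerivAt q (f t) t) (hf : ∀ t ∈ Ioo a b, 0 ≤ f t)
    (ht : t ∈ Ioo a b) :
    greenOp a b P (fun r => ENNReal.ofReal (f r)) t = ENNReal.ofReal (y t) := by
  have inner {s} (hs : s ∈ Ioo a b) : ∫⁻ r in Ioo a s, ENNReal.ofReal (f r) =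
      ENNReal.ofReal (q s) := by
    have hsub : Ioo a s ⊆ Ioo a b := Ioo_subset_Ioo_right hs.2.le
    rw [lintegral_Ioo_ofReal_deriv hs.1.le (hq.mono (Icc_subset_Ico_right hs.2))
      (fun r hr => hq' r (hsub hr)) fun r hr => hf r (hsub hr), hqa, sub_zero]
  have hq0 {s} (hs : s ∈ Ioo a b) : 0 ≤ q s := by
    have hmono : MonotoneOn q (Ico a b) :=
      monotoneOn_of_hasDerivWithinAt_nonneg (convex_Ico a b) hq
        (fun r hr => (hq' r (by rwa [interior_Ico] at hr)).hasDerivWithinAt)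
        fun r hr => hf r (by rwa [interior_Ico] at hr)
    exact hqa ▸ hmono ⟨le_rfl, hs.1.trans hs.2⟩ ⟨hs.1.le, hs.2⟩ hs.1.le
  have hsub : Ioo t b ⊆ Ioo a b := Ioo_subset_Ioo_left ht.1.le
  have outer := lintegral_Ioo_ofReal_deriv ht.2.le (hy.mono (Icc_subset_Icc_left ht.1.le)).neg
    (fun s hs => (hy' s (hsub hs)).neg)
    fun s hs => by rw [neg_neg]; exact div_nonneg (hq0 (hsub hs)) (hP s (hsub hs)).le
  rw [greenOp, setLIntegral_congr_fun (g := fun s => ENNReal.ofReal (- -(q s / P s)))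
    measurableSet_Ioo fun s hs => ?_, outer]
  · simp [hyb]
  · simp only [inner (hsub hs), neg_neg, ENNReal.ofReal_div_of_pos (hP s (hsub hs))]

theorem lintegral_Ioo_ne_top_of_greenOp_ne_top {f : ℝ → ℝ≥0∞}
    (hfin : ∀ t ∈ Ioo a b, greenOp a b P f t ≠ ∞) (ht : t ∈ Ioo a b) :
    ∫⁻ r in Ioo a t, f r ≠ ∞ := by
  intro htop
  refine hfin t ht (top_le_iff.1 ?_)
  calc ∞ = ∫⁻ _ in Ioo t b, ∞ := by
        rw [setLIntegral_const, Real.volume_Ioo, ENNReal.top_mul]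
        exact (ENNReal.ofReal_pos.2 (sub_pos.2 ht.2)).ne'
    _ ≤ greenOp a b P f t := setLIntegral_mono' measurableSet_Ioo fun s hs => by
        have hs_top : ∫⁻ r in Ioo a s, f r = ∞ :=
          top_le_iff.1 (htop.ge.trans (lintegral_mono_set (Ioo_subset_Ioo_right hs.1.le)))
        rw [hs_top, ENNReal.top_div_of_ne_top ENNReal.ofReal_ne_top]

theorem continuousOn_toReal_greenOp {f : ℝ → ℝ≥0∞} (hP : ContinuousOn P (Ioo a b))
    (hfin : ∀ t ∈ Ioo a b, greenOp a b P f t ≠ ∞) :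
    ContinuousOn (fun t => (greenOp a b P f t).toReal) (Ioo a b) := by
  have hmono : Monotone fun s => ∫⁻ r in Ioo a s, f r :=
    fun s s' h => lintegral_mono_set (Ioo_subset_Ioo_right h)
  exact continuousOn_toReal_lintegral_Ioo_right
    (hmono.measurable.aemeasurable.div (hP.aemeasurable measurableSet_Ioo).ennreal_ofReal) hfin

theorem hasDerivAt_toReal_greenOp_ofReal {g : ℝ → ℝ} (hP : ContinuousOn P (Ioo a b))
    (hP0 : ∀ t ∈ Ioo a b, 0 < P t) (hg : ContinuousOn g (Ioo a b))
    (hg0 : ∀ t ∈ Ioo a b, 0 ≤ g t)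
    (hfin : ∀ t ∈ Ioo a b, greenOp a b P (fun r => ENNReal.ofReal (g r)) t ≠ ∞)
    (ht : t ∈ Ioo a b) :
    HasDerivAt (fun t => (greenOp a b P (fun r => ENNReal.ofReal (g r)) t).toReal)
      (-((∫⁻ r in Ioo a t, ENNReal.ofReal (g r)).toReal / P t)) t := by
  have hinner (s) (hs : s ∈ Ioo a b) := lintegral_Ioo_ne_top_of_greenOp_ne_top hfin hs
  have heq {u} (hu : u ∈ Ioo a b) : greenOp a b P (fun r => ENNReal.ofReal (g r)) u =
      ∫⁻ s in Ioo u b, ENNReal.ofReal ((∫⁻ r in Ioo a s, ENNReal.ofReal (g r)).toReal / P s) :=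
    setLIntegral_congr_fun measurableSet_Ioo fun s hs => by
      have hs' : s ∈ Ioo a b := Ioo_subset_Ioo_left hu.1.le hs
      simp only [ENNReal.ofReal_div_of_pos (hP0 s hs'), ENNReal.ofReal_toReal (hinner s hs')]
  have hcont : ContinuousOn (fun s => (∫⁻ r in Ioo a s, ENNReal.ofReal (g r)).toReal / P s)
      (Ioo a b) := .div (fun s hs => (hasDerivAt_toReal_lintegral_Ioo_left hg hg0 hinner
        hs).continuousAt.continuousWithinAt) hP fun s hs => (hP0 s hs).ne'
  refine (hasDerivAt_toReal_lintegral_Ioo_right hcont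
    (fun s hs => div_nonneg toReal_nonneg (hP0 s hs).le) (fun u hu => heq hu ▸ hfin u hu)
    ht).congr_of_eventuallyEq ?_
  filter_upwards [Ioo_mem_nhds ht.1 ht.2] with u hu
  rw [heq hu]

theorem exists_hasDerivAt_of_sub_super {h : ℝ → ℝ → ℝ} {lo hi : ℝ → ℝ}
    (hP : ContinuousOn P (Ioo a b)) (hP0 : ∀ t ∈ Ioo a b, 0 < P t)
    (hh : ContinuousOn (Function.uncurry h) {x | x.1 ∈ Ioo a b ∧ x.2 ∈ Icc (lo x.1) (hi x.1)})
    (hmono : ∀ t ∈ Ioo a b, MonotoneOn (h t) (Icc (lo t) (hi t)))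
    (hlo : ∀ t ∈ Ioo a b, 0 ≤ lo t) (hlohi : ∀ t ∈ Ioo a b, lo t ≤ hi t)
    (hh0 : ∀ t ∈ Ioo a b, 0 ≤ h t (lo t))
    (hsub : ∀ t ∈ Ioo a b,
      ENNReal.ofReal (lo t) ≤ greenOp a b P (fun r => ENNReal.ofReal (h r (lo r))) t)
    (hsuper : ∀ t ∈ Ioo a b,
      greenOp a b P (fun r => ENNReal.ofReal (h r (hi r))) t ≤ ENNReal.ofReal (hi t)) :
    ∃ y z : ℝ → ℝ, ∀ t ∈ Ioo a b,
      y t ∈ Icc (lo t) (hi t) ∧ HasDerivAt y (-(z t / P t)) t ∧ HasDerivAt z (h t (y t)) t := by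
  let F (x : ℝ → ℝ) (r : ℝ) : ℝ≥0∞ := ENNReal.ofReal (h r (x r))
  have hF {x x' : ℝ → ℝ} (hx : ∀ r ∈ Ioo a b, lo r ≤ x r) (hxx' : ∀ r ∈ Ioo a b, x r ≤ x' r)
      (hx' : ∀ r ∈ Ioo a b, x' r ≤ hi r) (t) : greenOp a b P (F x) t ≤ greenOp a b P (F x') t :=
    greenOp_mono fun r hr => ENNReal.ofReal_le_ofReal <| hmono r hr
      ⟨hx r hr, (hxx' r hr).trans (hx' r hr)⟩ ⟨(hx r hr).trans (hxx' r hr), hx' r hr⟩ (hxx' r hr)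
  have hfin {x : ℝ → ℝ} (hx : ∀ r ∈ Ioo a b, x r ∈ Icc (lo r) (hi r)) (t) (ht : t ∈ Ioo a b) :
      greenOp a b P (F x) t ≠ ∞ :=
    ((hF (fun r hr => (hx r hr).1) (fun r hr => (hx r hr).2) (fun _ _ => le_rfl) t).trans
      (hsuper t ht)).trans_lt ofReal_lt_top |>.ne
  have hlofin (t) (ht : t ∈ Ioo a b) := hfin (fun r hr => ⟨le_rfl, hlohi r hr⟩) t ht
  obtain ⟨y, hy⟩ := exists_fixedPoint_of_monotone_between
    (T := fun x t => (greenOp a b P (F x) t).toReal) hlohi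
    (fun x x' hx hxx' hx' t ht => toReal_mono
      (hfin (fun r hr => ⟨(hx r hr).trans (hxx' r hr), hx' r hr⟩) t ht) (hF hx hxx' hx' t))
    (fun t ht => (ofReal_le_iff_le_toReal (hlofin t ht)).1 (hsub t ht))
    (fun t ht => toReal_le_of_le_ofReal ((hlo t ht).trans (hlohi t ht)) (hsuper t ht))
  obtain ⟨hy, hTy⟩ := forall₂_and.1 hy
  have hycont : ContinuousOn y (Ioo a b) :=
    (continuousOn_toReal_greenOp hP (hfin hy)).congr fun t ht => (hTy t ht).symm
  have hhy : ContinuousOn (fun t => h t (y t)) (Ioo a b) :=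
    hh.comp (continuousOn_id.prodMk hycont) fun t ht => ⟨ht, hy t ht⟩
  have hhy0 (t) (ht : t ∈ Ioo a b) : 0 ≤ h t (y t) :=
    (hh0 t ht).trans (hmono t ht ⟨le_rfl, hlohi t ht⟩ (hy t ht) (hy t ht).1)
  refine ⟨y, fun t => (∫⁻ r in Ioo a t, F y r).toReal, fun t ht => ⟨hy t ht, ?_, ?_⟩⟩
  · refine (hasDerivAt_toReal_greenOp_ofReal hP hP0 hhy hhy0 (hfin hy) ht).congr_of_eventuallyEq ?_
    filter_upwards [Ioo_mem_nhds ht.1 ht.2] with s hs using (hTy s hs).symm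
  · exact hasDerivAt_toReal_lintegral_Ioo_left hhy hhy0
      (fun s hs => lintegral_Ioo_ne_top_of_greenOp_ne_top (hfin hy) hs) ht

end GreenOp

section LimitAtSingularEndpoint

open Filter Topology

theorem exists_tendsto_left_of_monotoneOn_mul_deriv {Z Z' q : ℝ → ℝ} {a b B : ℝ} (hab : a < b)
    (hZ : ∀ t ∈ Ioo a b, HasDerivAt Z (Z' t) t) (hq : ∀ t ∈ Ioo a b, 0 < q t)
    (hmono : MonotoneOn (fun t => q t * Z' t) (Ioo a b)) (hB : ∀ t ∈ Ioo a b, |Z t| ≤ B) :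
    ∃ L, Tendsto Z (𝓝[<] b) (𝓝 L) := by
  have tendsto_of_monotone {W : ℝ → ℝ} {c : ℝ} (hc : c ∈ Ico a b) (hW : MonotoneOn W (Ioo c b))
      (hWB : ∀ t ∈ Ioo a b, |W t| ≤ B) : ∃ L, Tendsto W (𝓝[<] b) (𝓝 L) := by
    refine ⟨_, hW.tendsto_nhdsWithin_Ioo_left (nonempty_Ioo.2 hc.2) ⟨B, ?_⟩⟩
    rintro _ ⟨t, ht, rfl⟩
    exact (le_abs_self _).trans (hWB t ⟨hc.1.trans_lt ht.1, ht.2⟩)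
  have monotone_of {W W' : ℝ → ℝ} {c : ℝ} (hW : ∀ t ∈ Ioo c b, HasDerivAt W (W' t) t)
      (hW' : ∀ t ∈ Ioo c b, 0 ≤ W' t) : MonotoneOn W (Ioo c b) :=
    monotoneOn_of_hasDerivWithinAt_nonneg (convex_Ioo c b)
      (fun t ht => (hW t ht).continuousAt.continuousWithinAt)
      (fun t ht => (hW t (interior_subset ht)).hasDerivWithinAt)
      fun t ht => hW' t (interior_subset ht)
  by_cases hpos : ∃ c ∈ Ioo a b, 0 < Z' c
  · obtain ⟨c, hc, hZc⟩ := hpos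
    have hsub : Ioo c b ⊆ Ioo a b := Ioo_subset_Ioo_left hc.1.le
    refine tendsto_of_monotone ⟨hc.1.le, hc.2⟩
      (monotone_of (fun t ht => hZ t (hsub ht)) fun t ht => ?_) hB
    have : 0 < q t * Z' t :=
      (mul_pos (hq c hc) hZc).trans_le (hmono hc (hsub ht) ht.1.le)
    exact (pos_of_mul_pos_right this (hq t (hsub ht)).le).le
  · push Not at hpos
    obtain ⟨L, hL⟩ := tendsto_of_monotone ⟨le_rfl, hab⟩
      (monotone_of (fun t ht => (hZ t ht).neg) fun t ht => neg_nonneg.2 (hpos t ht))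
      fun t ht => (abs_neg (Z t)).le.trans (hB t ht)
    exact ⟨-L, by simpa using hL.neg⟩

theorem one_sub_sq_pos {t : ℝ} (ht : t ∈ Ioo (0 : ℝ) 1) : 0 < 1 - t ^ 2 := by
  nlinarith [ht.1, ht.2]

theorem hasDerivAt_one_sub_sq_rpow (s : ℝ) {t : ℝ} (ht : t ∈ Ioo (0 : ℝ) 1) :
    HasDerivAt (fun t : ℝ => (1 - t ^ 2) ^ s) (-(2 * s * t * (1 - t ^ 2) ^ (s - 1))) t := by
  refine (((hasDerivAt_pow 2 t).const_sub 1).rpow_const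
    (.inl (one_sub_sq_pos ht).ne')).congr_deriv ?_
  simp only [Nat.cast_ofNat, Nat.add_one_sub_one, pow_one]
  ring

variable {v v₁ v₂ : ℝ → ℝ} {a d B : ℝ}

theorem exists_tendsto_one_of_nonneg (ha : a ∈ Ico (0 : ℝ) 1)
    (hv : ∀ t ∈ Ioo a 1, HasDerivAt v (v₁ t) t) (hv₁ : ∀ t ∈ Ioo a 1, HasDerivAt v₁ (v₂ t) t)
    (hB : ∀ t ∈ Ioo a 1, |v t| ≤ B)
    (hode : ∀ t ∈ Ioo a 1, 0 ≤ (1 - t ^ 2) * v₂ t - (d - 1) * t * v₁ t) :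
    ∃ L, Tendsto v (𝓝[<] 1) (𝓝 L) := by
  have h01 {t} (ht : t ∈ Ioo a 1) : t ∈ Ioo (0 : ℝ) 1 := ⟨ha.1.trans_lt ht.1, ht.2⟩
  have hderiv {t} (ht : t ∈ Ioo a 1) : HasDerivAt (fun t => (1 - t ^ 2) ^ ((d - 1) / 2) * v₁ t)
      ((1 - t ^ 2) ^ ((d - 1) / 2 - 1) * ((1 - t ^ 2) * v₂ t - (d - 1) * t * v₁ t)) t := by
    have hpow : (1 - t ^ 2) ^ ((d - 1) / 2) = (1 - t ^ 2) ^ ((d - 1) / 2 - 1) * (1 - t ^ 2) := by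
      rw [← Real.rpow_add_one (one_sub_sq_pos (h01 ht)).ne', sub_add_cancel]
    refine ((hasDerivAt_one_sub_sq_rpow _ (h01 ht)).fun_mul (hv₁ t ht)).congr_deriv ?_
    rw [hpow]
    ring
  refine exists_tendsto_left_of_monotoneOn_mul_deriv ha.2 hv
    (fun t ht => Real.rpow_pos_of_pos (one_sub_sq_pos (h01 ht)) ((d - 1) / 2)) ?_ hB
  exact monotoneOn_of_hasDerivWithinAt_nonneg (convex_Ioo a 1)
    (fun t ht => (hderiv ht).continuousAt.continuousWithinAt)
    (fun t ht => (hderiv (interior_subset ht)).hasDerivWithinAt) fun t ht =>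
      mul_nonneg (Real.rpow_nonneg (one_sub_sq_pos (h01 (interior_subset ht))).le _)
        (hode t (interior_subset ht))

-- Subtracting `c t²` with `c` large makes the right-hand side nonnegative near `1`.
theorem exists_tendsto_one_of_bddBelow {C : ℝ} (ha : a ∈ Ico (0 : ℝ) 1) (hd : 1 < d) (hC : 0 ≤ C)
    (hv : ∀ t ∈ Ioo a 1, HasDerivAt v (v₁ t) t) (hv₁ : ∀ t ∈ Ioo a 1, HasDerivAt v₁ (v₂ t) t)
    (hB : ∀ t ∈ Ioo a 1, |v t| ≤ B)
    (hode : ∀ t ∈ Ioo a 1, -C ≤ (1 - t ^ 2) * v₂ t - (d - 1) * t * v₁ t) :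
    ∃ L, Tendsto v (𝓝[<] 1) (𝓝 L) := by
  set c := C / (d - 1)
  have hcd : c * (d - 1) = C := div_mul_cancel₀ C (sub_pos.2 hd).ne'
  have hc0 : 0 ≤ c := div_nonneg hC (sub_pos.2 hd).le
  set a' := max a √((d + 1) / (2 * d))
  have ha' : a' < 1 := max_lt ha.2 <| (Real.sqrt_lt' one_pos).2 <| by
    rw [one_pow, div_lt_one (by linarith)]; linarith
  have hsub : Ioo a' 1 ⊆ Ioo a 1 := Ioo_subset_Ioo_left (le_max_left _ _)
  have h0 {t} (ht : t ∈ Ioo a' 1) : 0 < t := ha.1.trans_lt (hsub ht).1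
  have hlarge {t} (ht : t ∈ Ioo a' 1) : (d - 1) / 2 ≤ d * t ^ 2 - 1 := by
    have := (Real.sqrt_lt' (h0 ht)).1 ((le_max_right _ _).trans_lt ht.1)
    rw [div_lt_iff₀ (by linarith)] at this
    linarith
  have hZ (t) (ht : t ∈ Ioo a' 1) := (hv t (hsub ht)).fun_sub ((hasDerivAt_pow 2 t).const_mul c)
  have hZ₁ (t) (ht : t ∈ Ioo a' 1) := (hv₁ t (hsub ht)).fun_sub
    (((hasDerivAt_pow 1 t).const_mul ((2 : ℕ) : ℝ)).const_mul c)
  have hbdd : ∀ t ∈ Ioo a' 1, |v t - c * t ^ 2| ≤ B + c := fun t ht => by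
    refine (abs_sub _ _).trans (add_le_add (hB t (hsub ht)) ?_)
    rw [abs_of_nonneg (by positivity)]
    exact mul_le_of_le_one_right hc0 (pow_le_one₀ (h0 ht).le ht.2.le)
  obtain ⟨L, hL⟩ := exists_tendsto_one_of_nonneg ⟨ha.1.trans (le_max_left _ _), ha'⟩ hZ hZ₁ hbdd
    (d := d) fun t ht => by
      simp only [Nat.cast_ofNat, Nat.add_one_sub_one, pow_one, Nat.sub_self, pow_zero, Nat.cast_one]
      nlinarith [hode t (hsub ht), mul_le_mul_of_nonneg_left (hlarge ht) hc0]
  have hsq : Tendsto (fun t : ℝ => c * t ^ 2) (𝓝[<] 1) (𝓝 (c * 1 ^ 2)) :=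
    ((continuous_pow 2).const_mul c).continuousWithinAt
  exact ⟨L + c * 1 ^ 2, by simpa using hL.add hsq⟩

end LimitAtSingularEndpoint

section ReductionOfOrder

variable {ψ ψ₁ w y z : ℝ → ℝ} {t : ℝ}

theorem hasDerivAt_reductionOfOrder (hψ : HasDerivAt ψ (ψ₁ t) t) (hψ0 : ψ t ≠ 0)
    (hy : HasDerivAt y (-(z t / (w t * ψ t ^ 2))) t) :
    HasDerivAt (fun t => ψ t * y t) (ψ₁ t * y t - z t / (w t * ψ t)) t := by
  refine (hψ.fun_mul hy).congr_deriv ?_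
  field_simp
  ring

theorem hasDerivAt_reductionOfOrder_deriv {ψ₂ w' g : ℝ} (hψ : HasDerivAt ψ (ψ₁ t) t)
    (hψ₁ : HasDerivAt ψ₁ ψ₂ t) (hw : HasDerivAt w w' t) (hψ0 : ψ t ≠ 0) (hw0 : w t ≠ 0)
    (hy : HasDerivAt y (-(z t / (w t * ψ t ^ 2))) t) (hz : HasDerivAt z g t) :
    HasDerivAt (fun t => ψ₁ t * y t - z t / (w t * ψ t))
      (ψ₂ * y t - (g - w' / w t * z t) / (w t * ψ t)) t := by
  refine ((hψ₁.fun_mul hy).fun_sub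
    (hz.fun_div (hw.fun_mul hψ) (mul_ne_zero hw0 hψ0))).congr_deriv ?_
  field_simp
  ring

end ReductionOfOrder

section AngularEquation

open Filter Topology

/-- `v` solves the angular equation in dimension `d` with parameters `μ`, `Λ` and exponent `p` on
`(0, 1)`, and `v₁`, `v₂` are its first two derivatives there. -/
def IsAngularSolution (d μ Λ p : ℝ) (v v₁ v₂ : ℝ → ℝ) : Prop :=
  ∀ t ∈ Ioo (0 : ℝ) 1, HasDerivAt v (v₁ t) t ∧ HasDerivAt v₁ (v₂ t) t ∧
    (1 - t ^ 2) * v₂ t - (d - 1) * t * v₁ t + μ / t ^ 2 * v t + Λ * v t = v t ^ p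

/-- The integrating factor `ω` of the angular operator:
`(1 - t²) v'' - (d - 1) t v' = (1 - t²) (ω v')' / ω`. -/
noncomputable def angularWeight (d t : ℝ) : ℝ := (1 - t ^ 2) ^ ((d - 1) / 2)

/-- The function `ψ` by which solutions are divided, `v = ψ y`. Its exponent at `t = 0` is the
indicial root `α`; the blow-up of order `m` at `t = 1` produces the large `multiplierPotential`. -/
noncomputable def multiplier (α m t : ℝ) : ℝ := t ^ α * (1 - t ^ 2) ^ (-m)

/-- The weight `ω ψ / (1 - t²)` of the equation for `y` obtained by substituting `v = ψ y`. -/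
noncomputable def reducedWeight (α d m t : ℝ) : ℝ :=
  angularWeight d t * multiplier α m t / (1 - t ^ 2)

/-- The function `K` with `(1 - t²) ψ'' - (d - 1) t ψ' + (μ / t²) ψ + α (α + d - 2) ψ = K ψ`, where
`ψ = multiplier α m` and `μ = α - α²`. -/
noncomputable def multiplierPotential (α d m t : ℝ) : ℝ :=
  2 * m * (1 + 2 * α) + 2 * m * (2 * (m + 1) - (d - 1)) * t ^ 2 / (1 - t ^ 2)

/-- The sub- and supersolutions `w = c t^α exp (-β t²)`. -/
noncomputable def barrier (α c β t : ℝ) : ℝ := c * t ^ α * Real.exp (-(β * t ^ 2))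

/-- The function `R` with `(1 - t²) w'' - (d - 1) t w' + (μ / t²) w + α (α + d - 2) w = R w`, where
`w = barrier α c β` and `μ = α - α²`. -/
noncomputable def barrierPotential (α d β t : ℝ) : ℝ :=
  (1 - t ^ 2) * (4 * β ^ 2 * t ^ 2 - 2 * β - 4 * α * β) + 2 * β * (d - 1) * t ^ 2

/-- The right-hand side of the equation `-(ω ψ² y')' = h(t, y)` which the angular equation with
`Λ = α (α + d - 2) + κ` becomes under the substitution `v = ψ y`. -/
noncomputable def reducedRHS (α d κ m p t y : ℝ) : ℝ :=
  reducedWeight α d m t *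
    ((multiplierPotential α d m t + κ) * (multiplier α m t * y) - (multiplier α m t * y) ^ p)

variable {α β κ μ Λ d m p c t : ℝ}

theorem angularWeight_pos (d : ℝ) (ht : t ∈ Ioo (0 : ℝ) 1) : 0 < angularWeight d t :=
  Real.rpow_pos_of_pos (one_sub_sq_pos ht) _

theorem hasDerivAt_angularWeight (d : ℝ) (ht : t ∈ Ioo (0 : ℝ) 1) :
    HasDerivAt (angularWeight d) (-((d - 1) * t / (1 - t ^ 2) * angularWeight d t)) t := by
  refine (hasDerivAt_one_sub_sq_rpow _ ht).congr_deriv ?_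
  rw [angularWeight, Real.rpow_sub_one (one_sub_sq_pos ht).ne']
  ring

theorem multiplier_pos (α m : ℝ) (ht : t ∈ Ioo (0 : ℝ) 1) : 0 < multiplier α m t :=
  mul_pos (Real.rpow_pos_of_pos ht.1 _) (Real.rpow_pos_of_pos (one_sub_sq_pos ht) _)

theorem reducedWeight_pos (α d m : ℝ) (ht : t ∈ Ioo (0 : ℝ) 1) : 0 < reducedWeight α d m t :=
  div_pos (mul_pos (angularWeight_pos d ht) (multiplier_pos α m ht)) (one_sub_sq_pos ht)

theorem hasDerivAt_multiplier (α m : ℝ) (ht : t ∈ Ioo (0 : ℝ) 1) :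
    HasDerivAt (multiplier α m) (multiplier α m t * (α / t + 2 * m * t / (1 - t ^ 2))) t := by
  refine ((Real.hasDerivAt_rpow_const (p := α) (.inl ht.1.ne')).fun_mul
    (hasDerivAt_one_sub_sq_rpow (-m) ht)).congr_deriv ?_
  rw [multiplier, Real.rpow_sub_one ht.1.ne', Real.rpow_sub_one (one_sub_sq_pos ht).ne']
  ring

theorem hasDerivAt_deriv_multiplier (α d m : ℝ) (ht : t ∈ Ioo (0 : ℝ) 1) :
    HasDerivAt (fun t => multiplier α m t * (α / t + 2 * m * t / (1 - t ^ 2)))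
      (multiplier α m t / (1 - t ^ 2) * (multiplierPotential α d m t - (α - α ^ 2) / t ^ 2
        - α * (α + d - 2) + (d - 1) * t * (α / t + 2 * m * t / (1 - t ^ 2)))) t := by
  have ht0 := ht.1.ne'
  have hX := (one_sub_sq_pos ht).ne'
  have hlog : HasDerivAt (fun t => α / t + 2 * m * t / (1 - t ^ 2))
      (-α / t ^ 2 + (2 * m * (1 - t ^ 2) + 4 * m * t ^ 2) / (1 - t ^ 2) ^ 2) t := by
    refine (((hasDerivAt_const t α).fun_div (hasDerivAt_id t) ht0).fun_add
      (((hasDerivAt_id t).const_mul (2 * m)).fun_div ((hasDerivAt_pow 2 t).const_sub 1)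
        hX)).congr_deriv ?_
    simp only [id, Nat.cast_ofNat, Nat.add_one_sub_one, pow_one]
    ring
  refine ((hasDerivAt_multiplier α m ht).fun_mul hlog).congr_deriv ?_
  rw [multiplierPotential]
  field_simp
  ring

theorem isAngularSolution_multiplier_mul {y z : ℝ → ℝ}
    (hy : ∀ t ∈ Ioo (0 : ℝ) 1, HasDerivAt y (-(z t / (angularWeight d t * multiplier α m t ^ 2))) t)
    (hz : ∀ t ∈ Ioo (0 : ℝ) 1, HasDerivAt z (reducedRHS α d κ m p t (y t)) t) :
    ∃ v₁ v₂, IsAngularSolution d (α - α ^ 2) (α * (α + d - 2) + κ) p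
      (fun t => multiplier α m t * y t) v₁ v₂ := by
  have hv (t) (ht : t ∈ Ioo (0 : ℝ) 1) := hasDerivAt_reductionOfOrder
    (ψ₁ := fun t => multiplier α m t * (α / t + 2 * m * t / (1 - t ^ 2)))
    (hasDerivAt_multiplier α m ht) (multiplier_pos α m ht).ne' (hy t ht)
  have hv₁ (t) (ht : t ∈ Ioo (0 : ℝ) 1) := hasDerivAt_reductionOfOrder_deriv
    (hasDerivAt_multiplier α m ht) (hasDerivAt_deriv_multiplier α d m ht)
    (hasDerivAt_angularWeight d ht) (multiplier_pos α m ht).ne' (angularWeight_pos d ht).ne'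
    (hy t ht) (hz t ht)
  refine ⟨_, _, fun t ht => ⟨hv t ht, hv₁ t ht, ?_⟩⟩
  have hψ0 := (multiplier_pos α m ht).ne'
  have hω0 := (angularWeight_pos d ht).ne'
  have hX := (one_sub_sq_pos ht).ne'
  have ht0 := ht.1.ne'
  simp only [reducedRHS, reducedWeight]
  generalize (multiplier α m t * y t) ^ p = vp
  field_simp
  ring

theorem continuousOn_angularWeight (d : ℝ) : ContinuousOn (angularWeight d) (Ico 0 1) :=
  (by fun_prop : ContinuousOn (fun t : ℝ => 1 - t ^ 2) (Ico 0 1)).rpow_const fun _ ht =>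
    .inl (by nlinarith [ht.1, ht.2])

theorem continuousOn_multiplier (hα : 0 ≤ α) (m : ℝ) : ContinuousOn (multiplier α m) (Ico 0 1) :=
  (continuous_id.rpow_const fun _ => .inr hα).continuousOn.mul <|
    (by fun_prop : ContinuousOn (fun t : ℝ => 1 - t ^ 2) (Ico 0 1)).rpow_const fun _ ht =>
      .inl (by nlinarith [ht.1, ht.2])

theorem two_mul_le_multiplierPotential (hα : 0 ≤ α) (hm : 0 ≤ m) (hd : d - 1 ≤ 2 * (m + 1))
    (ht : t ∈ Ioo (0 : ℝ) 1) : 2 * m ≤ multiplierPotential α d m t := by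
  have h₁ : 0 ≤ 2 * m * (2 * (m + 1) - (d - 1)) * t ^ 2 / (1 - t ^ 2) :=
    div_nonneg (mul_nonneg (mul_nonneg (by linarith) (sub_nonneg.2 hd)) (sq_nonneg t))
      (one_sub_sq_pos ht).le
  have h₂ : 0 ≤ m * α := mul_nonneg hm hα
  rw [multiplierPotential]
  linarith

theorem barrier_pos (α β : ℝ) (hc : 0 < c) (ht : 0 < t) : 0 < barrier α c β t :=
  mul_pos (mul_pos hc (Real.rpow_pos_of_pos ht _)) (Real.exp_pos _)

theorem barrier_le (α : ℝ) (hβ : 0 ≤ β) (hc : 0 ≤ c) (ht : 0 ≤ t) :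
    barrier α c β t ≤ c * t ^ α :=
  mul_le_of_le_one_right (mul_nonneg hc (Real.rpow_nonneg ht _))
    (Real.exp_le_one_iff.2 (neg_nonpos.2 (mul_nonneg hβ (sq_nonneg t))))

theorem hasDerivAt_exp_neg_mul_sq (β t : ℝ) :
    HasDerivAt (fun t => Real.exp (-(β * t ^ 2))) (-(2 * β * t) * Real.exp (-(β * t ^ 2))) t := by
  refine (((hasDerivAt_pow 2 t).const_mul β).fun_neg.exp).congr_deriv ?_
  simp only [Nat.cast_ofNat, Nat.add_one_sub_one, pow_one]
  ring

theorem hasDerivAt_barrier (α c β : ℝ) (ht : 0 < t) :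
    HasDerivAt (barrier α c β) (barrier α c β t * (α / t - 2 * β * t)) t := by
  refine (((Real.hasDerivAt_rpow_const (p := α) (.inl ht.ne')).const_mul c).fun_mul
    (hasDerivAt_exp_neg_mul_sq β t)).congr_deriv ?_
  rw [barrier, Real.rpow_sub_one ht.ne']
  ring

theorem continuous_barrier (hα : 0 ≤ α) (c β : ℝ) : Continuous (barrier α c β) :=
  ((continuous_id.rpow_const fun _ => .inr hα).const_mul c).mul (by fun_prop)

/-- The quotient of `barrier α c β` by `multiplier α m`, in a form that is continuous on
`[0, 1]`. -/
noncomputable def reducedBarrier (m c β t : ℝ) : ℝ :=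
  c * Real.exp (-(β * t ^ 2)) * (1 - t ^ 2) ^ m

theorem multiplier_mul_reducedBarrier (α m c β : ℝ) (ht : t ∈ Ioo (0 : ℝ) 1) :
    multiplier α m t * reducedBarrier m c β t = barrier α c β t := by
  have hX := one_sub_sq_pos ht
  rw [multiplier, reducedBarrier, barrier, Real.rpow_neg hX.le]
  field_simp

theorem continuous_reducedBarrier (hm : 0 ≤ m) (c β : ℝ) : Continuous (reducedBarrier m c β) :=
  Continuous.mul (by fun_prop)
    ((by fun_prop : Continuous fun t : ℝ => 1 - t ^ 2).rpow_const fun _ => .inr hm)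

theorem hasDerivAt_reducedBarrier (m c β : ℝ) (ht : t ∈ Ioo (0 : ℝ) 1) :
    HasDerivAt (reducedBarrier m c β)
      (-(reducedBarrier m c β t * (2 * β * t + 2 * m * t / (1 - t ^ 2)))) t := by
  refine (((hasDerivAt_exp_neg_mul_sq β t).const_mul c).fun_mul
    (hasDerivAt_one_sub_sq_rpow m ht)).congr_deriv ?_
  rw [reducedBarrier, Real.rpow_sub_one (one_sub_sq_pos ht).ne']
  ring

/-- The flux `-ω ψ² y'` of `y = reducedBarrier m c β`. -/
noncomputable def barrierFlux (α d m c β t : ℝ) : ℝ :=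
  t * reducedWeight α d m t * barrier α c β t *
    (2 * β * (1 - t ^ 2) + 2 * m)

theorem continuousOn_barrierFlux (hα : 0 ≤ α) (d m c β : ℝ) :
    ContinuousOn (barrierFlux α d m c β) (Ico 0 1) := by
  have hquot := ((continuousOn_angularWeight d).mul (continuousOn_multiplier hα m)).div
    (by fun_prop : ContinuousOn (fun t : ℝ => 1 - t ^ 2) (Ico 0 1))
    fun t ht => (by nlinarith [ht.1, ht.2] : (0 : ℝ) < 1 - t ^ 2).ne'
  exact ((continuousOn_id.mul hquot).mul (continuous_barrier hα c β).continuousOn).mul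
    (by fun_prop)

theorem hasDerivAt_barrierFlux (α d m c β : ℝ) (ht : t ∈ Ioo (0 : ℝ) 1) :
    HasDerivAt (barrierFlux α d m c β) (reducedWeight α d m t *
      ((multiplierPotential α d m t - barrierPotential α d β t) * barrier α c β t)) t := by
  have hX := (one_sub_sq_pos ht).ne'
  have ht0 := ht.1.ne'
  have hsq : HasDerivAt (fun t : ℝ => 1 - t ^ 2) (-(2 * t)) t := by
    simpa using (hasDerivAt_pow 2 t).const_sub 1
  have hquot := ((hasDerivAt_angularWeight d ht).fun_mul (hasDerivAt_multiplier α m ht)).fun_div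
    hsq hX
  refine ((((hasDerivAt_id t).fun_mul hquot).fun_mul (hasDerivAt_barrier α c β ht.1)).fun_mul
    ((hsq.const_mul (2 * β)).add_const (2 * m))).congr_deriv ?_
  rw [multiplierPotential, barrierPotential, reducedWeight]
  simp only [id]
  field_simp
  ring

theorem greenOp_barrier (hα : 0 ≤ α) (hm : 0 < m) (hc : 0 < c)
    (hRK : ∀ t ∈ Ioo (0 : ℝ) 1, barrierPotential α d β t ≤ multiplierPotential α d m t)
    (ht : t ∈ Ioo (0 : ℝ) 1) :
    greenOp 0 1 (fun t => angularWeight d t * multiplier α m t ^ 2)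
      (fun r => ENNReal.ofReal (reducedWeight α d m r *
        ((multiplierPotential α d m r - barrierPotential α d β r) * barrier α c β r))) t =
      ENNReal.ofReal (reducedBarrier m c β t) := by
  refine greenOp_ofReal (q := barrierFlux α d m c β)
    (fun s hs => mul_pos (angularWeight_pos d hs) (pow_pos (multiplier_pos α m hs) 2))
    (continuous_reducedBarrier hm.le c β).continuousOn ?_ (fun s hs => ?_)
    (continuousOn_barrierFlux hα d m c β) ?_ (fun s hs => hasDerivAt_barrierFlux α d m c β hs)
    (fun s hs => ?_) ht
  · simp [reducedBarrier, Real.zero_rpow hm.ne']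
  · have hψ0 := (multiplier_pos α m hs).ne'
    have hω0 := (angularWeight_pos d hs).ne'
    have hX := (one_sub_sq_pos hs).ne'
    refine (hasDerivAt_reducedBarrier m c β hs).congr_deriv ?_
    rw [barrierFlux, reducedWeight, ← multiplier_mul_reducedBarrier α m c β hs]
    field_simp
  · simp [barrierFlux]
  · exact mul_nonneg (reducedWeight_pos α d m hs).le
      (mul_nonneg (sub_nonneg.2 (hRK s hs)) (barrier_pos α β hc hs.1).le)

theorem reducedRHS_reducedBarrier (α β d κ m p : ℝ) (hc : 0 < c) (ht : t ∈ Ioo (0 : ℝ) 1) :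
    reducedRHS α d κ m p t (reducedBarrier m c β t) =
      reducedWeight α d m t *
        ((multiplierPotential α d m t + κ - barrier α c β t ^ (p - 1)) * barrier α c β t) := by
  have hw := (barrier_pos α β hc ht.1).ne'
  rw [reducedRHS, multiplier_mul_reducedBarrier α m c β ht, Real.rpow_sub_one hw, sub_mul _ (_ / _),
    div_mul_cancel₀ _ hw]

theorem greenOp_le_reducedBarrier (hα : 0 ≤ α) (hm : 0 < m) (hc : 0 < c)
    (hRK : ∀ t ∈ Ioo (0 : ℝ) 1, barrierPotential α d β t ≤ multiplierPotential α d m t)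
    (hsuper : ∀ t ∈ Ioo (0 : ℝ) 1, κ + barrierPotential α d β t ≤ barrier α c β t ^ (p - 1))
    (ht : t ∈ Ioo (0 : ℝ) 1) :
    greenOp 0 1 (fun t => angularWeight d t * multiplier α m t ^ 2)
      (fun r => ENNReal.ofReal (reducedRHS α d κ m p r (reducedBarrier m c β r))) t ≤
      ENNReal.ofReal (reducedBarrier m c β t) := by
  refine (greenOp_mono fun r hr => ENNReal.ofReal_le_ofReal ?_).trans
    (greenOp_barrier hα hm hc hRK ht).le
  rw [reducedRHS_reducedBarrier α β d κ m p hc hr]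
  refine mul_le_mul_of_nonneg_left (mul_le_mul_of_nonneg_right ?_ (barrier_pos α β hc hr.1).le)
    (reducedWeight_pos α d m hr).le
  linarith [hsuper r hr]

theorem reducedBarrier_le_greenOp (hα : 0 ≤ α) (hm : 0 < m) (hc : 0 < c)
    (hRK : ∀ t ∈ Ioo (0 : ℝ) 1, barrierPotential α d β t ≤ multiplierPotential α d m t)
    (hsub : ∀ t ∈ Ioo (0 : ℝ) 1, barrier α c β t ^ (p - 1) ≤ κ + barrierPotential α d β t)
    (ht : t ∈ Ioo (0 : ℝ) 1) :
    ENNReal.ofReal (reducedBarrier m c β t) ≤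
      greenOp 0 1 (fun t => angularWeight d t * multiplier α m t ^ 2)
        (fun r => ENNReal.ofReal (reducedRHS α d κ m p r (reducedBarrier m c β r))) t := by
  refine (greenOp_barrier hα hm hc hRK ht).ge.trans
    (greenOp_mono fun r hr => ENNReal.ofReal_le_ofReal ?_)
  rw [reducedRHS_reducedBarrier α β d κ m p hc hr]
  refine mul_le_mul_of_nonneg_left (mul_le_mul_of_nonneg_right ?_ (barrier_pos α β hc hr.1).le)
    (reducedWeight_pos α d m hr).le
  linarith [hsub r hr]

theorem continuousOn_uncurry_reducedRHS (hα : 0 ≤ α) (d κ m : ℝ) (hp : 0 ≤ p) :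
    ContinuousOn (Function.uncurry (reducedRHS α d κ m p)) {x | x.1 ∈ Ioo (0 : ℝ) 1} := by
  have hX : ∀ x ∈ {x : ℝ × ℝ | x.1 ∈ Ioo (0 : ℝ) 1}, 1 - x.1 ^ 2 ≠ 0 :=
    fun x hx => (one_sub_sq_pos hx).ne'
  have hfst : MapsTo Prod.fst {x : ℝ × ℝ | x.1 ∈ Ioo (0 : ℝ) 1} (Ico 0 1) :=
    fun x hx => Ioo_subset_Ico_self hx
  have hω := (continuousOn_angularWeight d).comp continuousOn_fst hfst
  have hψ := (continuousOn_multiplier hα m).comp continuousOn_fst hfst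
  have hK : ContinuousOn (fun x : ℝ × ℝ => multiplierPotential α d m x.1)
      {x | x.1 ∈ Ioo (0 : ℝ) 1} :=
    continuousOn_const.add (.div (by fun_prop) (by fun_prop) hX)
  have hψy := hψ.mul (continuousOn_snd (s := {x : ℝ × ℝ | x.1 ∈ Ioo (0 : ℝ) 1}))
  exact ((hω.mul hψ).div (by fun_prop : ContinuousOn (fun x : ℝ × ℝ => 1 - x.1 ^ 2) _) hX).mul
    (((hK.add continuousOn_const).mul hψy).sub (hψy.rpow_const fun _ _ => .inr hp))

theorem monotoneOn_mul_sub_rpow {A M p : ℝ} (hp : 1 ≤ p) (hA : p * M ^ (p - 1) ≤ A) :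
    MonotoneOn (fun v => A * v - v ^ p) (Icc 0 M) := by
  refine monotoneOn_of_hasDerivWithinAt_nonneg (convex_Icc 0 M) (f' := fun v => A - p * v ^ (p - 1))
    ?_ (fun v _ => ?_) fun v hv => ?_
  · exact (continuousOn_id.const_mul A).sub
      (continuousOn_id.rpow_const fun _ _ => .inr (zero_le_one.trans hp))
  · simpa using (((hasDerivAt_id v).const_mul A).fun_sub
      (Real.hasDerivAt_rpow_const (.inr hp))).hasDerivWithinAt
  · have hv := interior_subset hv
    have : p * v ^ (p - 1) ≤ p * M ^ (p - 1) := mul_le_mul_of_nonneg_left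
      (Real.rpow_le_rpow hv.1 hv.2 (sub_nonneg.2 hp)) (zero_le_one.trans hp)
    exact sub_nonneg.2 (this.trans hA)

theorem monotoneOn_reducedRHS {M : ℝ} {s : Set ℝ} (hp : 1 ≤ p) (ht : t ∈ Ioo (0 : ℝ) 1)
    (hK : p * M ^ (p - 1) ≤ multiplierPotential α d m t + κ)
    (hs : ∀ y ∈ s, multiplier α m t * y ∈ Icc 0 M) : MonotoneOn (reducedRHS α d κ m p t) s :=
  fun _ hy _ hy' hyy' => mul_le_mul_of_nonneg_left
    (monotoneOn_mul_sub_rpow hp hK (hs _ hy) (hs _ hy')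
      (mul_le_mul_of_nonneg_left hyy' (multiplier_pos α m ht).le))
    (reducedWeight_pos α d m ht).le

theorem add_barrierPotential_le (hα : 0 ≤ α) (hκ : 0 ≤ κ) (d t : ℝ) :
    κ + barrierPotential α d κ t ≤ -κ + 2 * κ * (2 * κ + 2 * α + d) * t ^ 2 := by
  rw [barrierPotential]
  nlinarith [mul_nonneg hα hκ, mul_nonneg (sq_nonneg κ) (sq_nonneg (t ^ 2))]

-- For `t² ≤ κ / C` the left-hand side is nonpositive; beyond, the barrier is bounded below.
theorem exists_add_barrierPotential_le_barrier_rpow (hα : 0 ≤ α) (hd : 0 ≤ d) (hκ : 0 < κ)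
    (hp : 1 < p) : ∃ M > 0, ∀ t ∈ Ioo (0 : ℝ) 1,
      κ + barrierPotential α d κ t ≤ barrier α M κ t ^ (p - 1) := by
  set C := 2 * κ * (2 * κ + 2 * α + d)
  have hC : 0 < C := by positivity
  set t₀ := √(κ / C)
  have hb₀ : 0 < t₀ ^ α * Real.exp (-κ) :=
    mul_pos (Real.rpow_pos_of_pos (Real.sqrt_pos.2 (div_pos hκ hC)) α) (Real.exp_pos _)
  have hM : 0 < C ^ (p - 1)⁻¹ / (t₀ ^ α * Real.exp (-κ)) := by positivity
  refine ⟨_, hM, fun t ht => (add_barrierPotential_le hα hκ.le d t).trans ?_⟩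
  have ht0 : 0 < t := ht.1
  have hw := barrier_pos α κ hM ht0
  have htsq : t ^ 2 < 1 := sub_pos.1 (one_sub_sq_pos ht)
  rcases le_total t t₀ with h | h
  · have : C * t ^ 2 ≤ κ := by
      rw [← le_div_iff₀' hC, ← Real.le_sqrt' ht.1]
      exact h
    exact (by linarith : -κ + C * t ^ 2 ≤ 0).trans (Real.rpow_nonneg hw.le _)
  · calc -κ + C * t ^ 2 ≤ C := by nlinarith
      _ = (C ^ (p - 1)⁻¹) ^ (p - 1) := (Real.rpow_inv_rpow hC.le (sub_pos.2 hp).ne').symm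
      _ ≤ _ := Real.rpow_le_rpow (by positivity) ?_ (sub_pos.2 hp).le
    rw [barrier, mul_assoc, div_mul_eq_mul_div, le_div_iff₀ hb₀]
    gcongr
    nlinarith

theorem barrierPotential_zero (α d t : ℝ) : barrierPotential α d 0 t = 0 := by
  simp [barrierPotential]

theorem reducedBarrier_pos (m β : ℝ) (hc : 0 < c) (ht : t ∈ Ioo (0 : ℝ) 1) :
    0 < reducedBarrier m c β t :=
  mul_pos (mul_pos hc (Real.exp_pos _)) (Real.rpow_pos_of_pos (one_sub_sq_pos ht) _)

theorem reducedBarrier_zero_le_reducedBarrier {ε M : ℝ} (m : ℝ) (hκ : 0 ≤ κ) (hM : 0 ≤ M)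
    (hεM : ε ≤ M * Real.exp (-κ)) (ht : t ∈ Ioo (0 : ℝ) 1) :
    reducedBarrier m ε 0 t ≤ reducedBarrier m M κ t := by
  refine mul_le_mul_of_nonneg_right ?_ (Real.rpow_nonneg (one_sub_sq_pos ht).le m)
  rw [zero_mul, neg_zero, Real.exp_zero, mul_one]
  refine hεM.trans (mul_le_mul_of_nonneg_left (Real.exp_le_exp.2 (neg_le_neg ?_)) hM)
  exact mul_le_of_le_one_right hκ (sub_pos.1 (one_sub_sq_pos ht)).le

theorem exists_reduced_solution_between {ε M : ℝ} (hα : 0 ≤ α) (hp : 1 < p) (hκ : 0 < κ)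
    (hm : 0 < m) (hK : ∀ t ∈ Ioo (0 : ℝ) 1, p * M ^ (p - 1) ≤ multiplierPotential α d m t)
    (hε : 0 < ε) (hεM : ε ≤ M * Real.exp (-κ))
    (hsub : ∀ t ∈ Ioo (0 : ℝ) 1, barrier α ε 0 t ^ (p - 1) ≤ κ)
    (hsuper : ∀ t ∈ Ioo (0 : ℝ) 1, κ + barrierPotential α d κ t ≤ barrier α M κ t ^ (p - 1)) :
    ∃ y z : ℝ → ℝ, ∀ t ∈ Ioo (0 : ℝ) 1,
      y t ∈ Icc (reducedBarrier m ε 0 t) (reducedBarrier m M κ t) ∧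
      HasDerivAt y (-(z t / (angularWeight d t * multiplier α m t ^ 2))) t ∧
      HasDerivAt z (reducedRHS α d κ m p t (y t)) t := by
  have hM : 0 < M := pos_of_mul_pos_left (hε.trans_le hεM) (Real.exp_pos _).le
  have hMp : 0 < M ^ (p - 1) := Real.rpow_pos_of_pos hM _
  have hw_le (t) (ht : t ∈ Ioo (0 : ℝ) 1) : barrier α M κ t ≤ M :=
    (barrier_le α hκ.le hM.le ht.1.le).trans
      (mul_le_of_le_one_right hM.le (Real.rpow_le_one ht.1.le ht.2.le hα))
  have hK0 (t) (ht : t ∈ Ioo (0 : ℝ) 1) : 0 < multiplierPotential α d m t :=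
    (mul_pos (one_pos.trans hp) hMp).trans_le (hK t ht)
  have hRK (t) (ht : t ∈ Ioo (0 : ℝ) 1) :
      barrierPotential α d κ t ≤ multiplierPotential α d m t := by
    have := Real.rpow_le_rpow (barrier_pos α κ hM ht.1).le (hw_le t ht) (sub_pos.2 hp).le
    nlinarith [hsuper t ht, hK t ht]
  have hlo (t) (ht : t ∈ Ioo (0 : ℝ) 1) : 0 ≤ reducedBarrier m ε 0 t :=
    (reducedBarrier_pos m 0 hε ht).le
  have hψ (t) (ht : t ∈ Ioo (0 : ℝ) 1) : 0 < multiplier α m t := multiplier_pos α m ht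
  refine exists_hasDerivAt_of_sub_super
    (((continuousOn_angularWeight d).mul ((continuousOn_multiplier hα m).pow 2)).mono
      Ioo_subset_Ico_self)
    (fun t ht => mul_pos (angularWeight_pos d ht) (pow_pos (hψ t ht) 2))
    ((continuousOn_uncurry_reducedRHS hα d κ m (one_pos.trans hp).le).mono fun x hx => hx.1)
    (fun t ht => monotoneOn_reducedRHS hp.le ht ((hK t ht).trans (le_add_of_nonneg_right hκ.le))
      fun y hy => ⟨mul_nonneg (hψ t ht).le ((hlo t ht).trans hy.1), ?_⟩)
    hlo (fun t ht => reducedBarrier_zero_le_reducedBarrier m hκ.le hM.le hεM ht)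
    (fun t ht => ?_)
    (fun t ht => reducedBarrier_le_greenOp hα hm hε
      (fun t ht => (barrierPotential_zero α d t).trans_le (hK0 t ht).le)
      (fun t ht => by rw [barrierPotential_zero, add_zero]; exact hsub t ht) ht)
    (fun t ht => greenOp_le_reducedBarrier hα hm hM hRK hsuper ht)
  · exact ((mul_le_mul_of_nonneg_left hy.2 (hψ t ht).le).trans_eq
      (multiplier_mul_reducedBarrier α m M κ ht)).trans (hw_le t ht)
  · rw [reducedRHS_reducedBarrier α 0 d κ m p hε ht]
    exact mul_nonneg (reducedWeight_pos α d m ht).le (mul_nonneg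
      (by linarith [hsub t ht, hK0 t ht]) (barrier_pos α 0 hε ht.1).le)

theorem exists_isAngularSolution_between_barriers {ε M : ℝ} (hα : 0 ≤ α) (hp : 1 < p) (hκ : 0 < κ)
    (hε : 0 < ε) (hεM : ε ≤ M * Real.exp (-κ))
    (hsub : ∀ t ∈ Ioo (0 : ℝ) 1, barrier α ε 0 t ^ (p - 1) ≤ κ)
    (hsuper : ∀ t ∈ Ioo (0 : ℝ) 1, κ + barrierPotential α d κ t ≤ barrier α M κ t ^ (p - 1)) :
    ∃ v v₁ v₂, IsAngularSolution d (α - α ^ 2) (α * (α + d - 2) + κ) p v v₁ v₂ ∧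
      ∀ t ∈ Ioo (0 : ℝ) 1, v t ∈ Icc (barrier α ε 0 t) (barrier α M κ t) := by
  have hM : 0 < M := pos_of_mul_pos_left (hε.trans_le hεM) (Real.exp_pos _).le
  -- `m` is so large that `v ↦ (K + κ) v - v ^ p` is nondecreasing on `[0, M]`.
  obtain ⟨m, hmd, hmM⟩ : ∃ m, d ≤ m ∧ p * M ^ (p - 1) ≤ m := ⟨_, le_max_left _ _, le_max_right _ _⟩
  have hm : 0 < m := (mul_pos (one_pos.trans hp) (Real.rpow_pos_of_pos hM _)).trans_le hmM
  have hK (t) (ht : t ∈ Ioo (0 : ℝ) 1) : p * M ^ (p - 1) ≤ multiplierPotential α d m t :=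
    (by linarith : p * M ^ (p - 1) ≤ 2 * m).trans <|
      two_mul_le_multiplierPotential hα hm.le (by linarith) ht
  obtain ⟨y, z, hyz⟩ := exists_reduced_solution_between hα hp hκ hm hK hε hεM hsub hsuper
  obtain ⟨v₁, v₂, hv⟩ := isAngularSolution_multiplier_mul (fun t ht => (hyz t ht).2.1)
    fun t ht => (hyz t ht).2.2
  refine ⟨_, v₁, v₂, hv, fun t ht => ⟨?_, ?_⟩⟩
  · rw [← multiplier_mul_reducedBarrier α m ε 0 ht]
    exact mul_le_mul_of_nonneg_left (hyz t ht).1.1 (multiplier_pos α m ht).le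
  · rw [← multiplier_mul_reducedBarrier α m M κ ht]
    exact mul_le_mul_of_nonneg_left (hyz t ht).1.2 (multiplier_pos α m ht).le

theorem exists_isAngularSolution_between_rpow (hα : 0 ≤ α) (hd : 0 ≤ d) (hp : 1 < p)
    (hΛ : α * (α + d - 2) < Λ) :
    ∃ ε > 0, ∃ M > 0, ∃ v v₁ v₂, IsAngularSolution d (α - α ^ 2) Λ p v v₁ v₂ ∧
      ∀ t ∈ Ioo (0 : ℝ) 1, v t ∈ Icc (ε * t ^ α) (M * t ^ α) := by
  obtain ⟨κ, hκ, rfl⟩ := exists_pos_add_of_lt' hΛ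
  obtain ⟨M, hM, hsuper⟩ := exists_add_barrierPotential_le_barrier_rpow hα hd hκ hp
  obtain ⟨ε, hε, hεκ, hεM⟩ : ∃ ε > 0, ε ≤ κ ^ (p - 1)⁻¹ ∧ ε ≤ M * Real.exp (-κ) :=
    ⟨min (κ ^ (p - 1)⁻¹) (M * Real.exp (-κ)), by positivity, min_le_left _ _, min_le_right _ _⟩
  have hsub (t) (ht : t ∈ Ioo (0 : ℝ) 1) : barrier α ε 0 t ^ (p - 1) ≤ κ := by
    have hw : barrier α ε 0 t ≤ κ ^ (p - 1)⁻¹ := (barrier_le α le_rfl hε.le ht.1.le).trans <|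
      (mul_le_of_le_one_right hε.le (Real.rpow_le_one ht.1.le ht.2.le hα)).trans hεκ
    exact (Real.rpow_le_rpow (barrier_pos α 0 hε ht.1).le hw (sub_pos.2 hp).le).trans_eq
      (Real.rpow_inv_rpow hκ.le (sub_pos.2 hp).ne')
  obtain ⟨v, v₁, v₂, hv, hbd⟩ :=
    exists_isAngularSolution_between_barriers hα hp hκ hε hεM hsub hsuper
  refine ⟨ε, hε, M, hM, v, v₁, v₂, hv, fun t ht => ⟨?_, ?_⟩⟩
  · simpa [barrier] using (hbd t ht).1
  · exact (hbd t ht).2.trans (barrier_le α hκ.le hM.le ht.1.le)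

namespace IsAngularSolution

variable {v v₁ v₂ : ℝ → ℝ}

theorem congr {w : ℝ → ℝ} (h : IsAngularSolution d μ Λ p v v₁ v₂) (hw : EqOn w v (Ioo 0 1)) :
    IsAngularSolution d μ Λ p w v₁ v₂ := fun t ht => by
  obtain ⟨hv, hv₁, hode⟩ := h t ht
  exact ⟨hv.congr_of_eventuallyEq (hw.eventuallyEq_of_mem (Ioo_mem_nhds ht.1 ht.2)), hv₁,
    hw ht ▸ hode⟩

theorem continuousOn (h : IsAngularSolution d μ Λ p v v₁ v₂) : ContinuousOn v (Ioo 0 1) :=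
  fun t ht => (h t ht).1.continuousAt.continuousWithinAt

theorem hasDerivAt_deriv (h : IsAngularSolution d μ Λ p v v₁ v₂) (ht : t ∈ Ioo (0 : ℝ) 1) :
    HasDerivAt (deriv v) (v₂ t) t :=
  (h t ht).2.1.congr_of_eventuallyEq <| by
    filter_upwards [Ioo_mem_nhds ht.1 ht.2] with s hs using (h s hs).1.deriv

theorem deriv_eq (h : IsAngularSolution d μ Λ p v v₁ v₂) (ht : t ∈ Ioo (0 : ℝ) 1) :
    (1 - t ^ 2) * deriv (deriv v) t - (d - 1) * t * deriv v t + μ / t ^ 2 * v t + Λ * v t =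
      v t ^ p := by
  rw [(h.hasDerivAt_deriv ht).deriv, (h t ht).1.deriv]
  exact (h t ht).2.2

theorem continuousOn_deriv_deriv (h : IsAngularSolution d μ Λ p v v₁ v₂) (hp : 0 ≤ p) :
    ContinuousOn (deriv (deriv v)) (Ioo 0 1) := by
  have hv := h.continuousOn
  have hv' : ContinuousOn (deriv v) (Ioo 0 1) := fun t ht =>
    (h.hasDerivAt_deriv ht).continuousAt.continuousWithinAt
  have hμ : ContinuousOn (fun t => μ / t ^ 2) (Ioo 0 1) :=
    .div (by fun_prop) (by fun_prop) fun t ht => pow_ne_zero 2 ht.1.ne'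
  have hquot : ContinuousOn (fun t => (v t ^ p - μ / t ^ 2 * v t - Λ * v t +
      (d - 1) * t * deriv v t) / (1 - t ^ 2)) (Ioo 0 1) :=
    .div (by fun_prop) (by fun_prop) fun t ht => (one_sub_sq_pos ht).ne'
  refine hquot.congr fun t ht => ?_
  rw [eq_div_iff (one_sub_sq_pos ht).ne', ← h.deriv_eq ht]
  ring

theorem contDiffOn (h : IsAngularSolution d μ Λ p v v₁ v₂) (hp : 0 ≤ p) :
    ContDiffOn ℝ 2 v (Ioo 0 1) := by
  rw [← one_add_one_eq_two, contDiffOn_succ_iff_deriv_of_isOpen isOpen_Ioo]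
  refine ⟨fun t ht => (h t ht).1.differentiableAt.differentiableWithinAt, by simp, ?_⟩
  rw [← zero_add 1, contDiffOn_succ_iff_deriv_of_isOpen isOpen_Ioo, contDiffOn_zero]
  exact ⟨fun t ht => (h.hasDerivAt_deriv ht).differentiableAt.differentiableWithinAt, by simp,
    h.continuousOn_deriv_deriv hp⟩

theorem exists_tendsto_one {M : ℝ} (h : IsAngularSolution d μ Λ p v v₁ v₂) (hd : 1 < d)
    (hv : ∀ t ∈ Ioo (0 : ℝ) 1, v t ∈ Icc 0 M) : ∃ L, Tendsto v (𝓝[<] 1) (𝓝 L) := by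
  have h01 {t : ℝ} (ht : t ∈ Ioo (1 / 2) 1) : t ∈ Ioo (0 : ℝ) 1 := ⟨by linarith [ht.1], ht.2⟩
  have hM : 0 ≤ M := (hv (1 / 2) (by norm_num)).1.trans (hv (1 / 2) (by norm_num)).2
  refine exists_tendsto_one_of_bddBelow (a := 1 / 2) (B := M) (C := (4 * |μ| + |Λ|) * M)
    (by norm_num) hd (by positivity) (fun t ht => (h t (h01 ht)).1)
    (fun t ht => (h t (h01 ht)).2.1)
    (fun t ht => (abs_of_nonneg (hv t (h01 ht)).1).trans_le (hv t (h01 ht)).2) fun t ht => ?_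
  obtain ⟨hv0, hvM⟩ := hv t (h01 ht)
  have hμ : μ / t ^ 2 ≤ 4 * |μ| := by
    have hsq : 1 ≤ 4 * t ^ 2 := by nlinarith [ht.1]
    rw [div_le_iff₀ (by linarith)]
    nlinarith [le_abs_self μ, mul_le_mul_of_nonneg_left hsq (abs_nonneg μ)]
  have hcoef : (μ / t ^ 2 + Λ) * v t ≤ (4 * |μ| + |Λ|) * M :=
    mul_le_mul (add_le_add hμ (le_abs_self Λ)) hvM hv0 (by positivity)
  linarith [(h t (h01 ht)).2.2, Real.rpow_nonneg hv0 p]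

end IsAngularSolution

theorem exists_isAngularSolution_continuousOn_Icc (hα : 0 < α) (hd : 1 < d) (hp : 1 < p)
    (hΛ : α * (α + d - 2) < Λ) :
    ∃ ε > 0, ∃ M > 0, ∃ v v₁ v₂, IsAngularSolution d (α - α ^ 2) Λ p v v₁ v₂ ∧
      ContinuousOn v (Icc 0 1) ∧ ∀ t ∈ Icc (0 : ℝ) 1, v t ∈ Icc (ε * t ^ α) (M * t ^ α) := by
  obtain ⟨ε, hε, M, hM, u, u₁, u₂, hu, hbd⟩ :=
    exists_isAngularSolution_between_rpow hα.le (by linarith : 0 ≤ d) hp hΛ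
  have hpow (c : ℝ) : Continuous fun t : ℝ => c * t ^ α :=
    (continuous_id.rpow_const fun _ => .inr hα.le).const_mul c
  have hpow0 (c : ℝ) : Tendsto (fun t : ℝ => c * t ^ α) (𝓝[>] 0) (𝓝 0) := by
    simpa [Real.zero_rpow hα.ne'] using ((hpow c).tendsto 0).mono_left nhdsWithin_le_nhds
  have hev : ∀ᶠ t in 𝓝[>] (0 : ℝ), t ∈ Ioo (0 : ℝ) 1 := Ioo_mem_nhdsGT zero_lt_one
  have hu0 : Tendsto u (𝓝[>] 0) (𝓝 0) :=
    tendsto_of_tendsto_of_tendsto_of_le_of_le' (hpow0 ε) (hpow0 M)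
      (hev.mono fun t ht => (hbd t ht).1) (hev.mono fun t ht => (hbd t ht).2)
  obtain ⟨L, hL⟩ := hu.exists_tendsto_one hd (M := M) fun t ht =>
    ⟨(mul_nonneg hε.le (Real.rpow_nonneg ht.1.le α)).trans (hbd t ht).1,
      (hbd t ht).2.trans (mul_le_of_le_one_right hM.le (Real.rpow_le_one ht.1.le ht.2.le hα.le))⟩
  have hcont := continuousOn_Icc_extendFrom_Ioo hu.continuousOn hu0 hL
  have heq : EqOn (extendFrom (Ioo 0 1) u) u (Ioo 0 1) :=
    fun t ht => extendFrom_extends hu.continuousOn t ht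
  refine ⟨ε, hε, M, hM, extendFrom (Ioo 0 1) u, u₁, u₂, hu.congr heq, hcont, fun t ht => ?_⟩
  rw [← closure_Ioo zero_ne_one] at hcont ht
  exact ⟨le_on_closure (fun s hs => (hbd s hs).1.trans_eq (heq hs).symm)
      (hpow ε).continuousOn hcont ht,
    le_on_closure (fun s hs => (heq hs).trans_le (hbd s hs).2) hcont (hpow M).continuousOn ht⟩

end AngularEquation

theorem stmt8_general (d α μ Λ p : ℝ) (hd : 1 < d) (hα : 0 < α) (hμ : α ^ 2 - α + μ = 0)
    (hp : 1 < p) (hΛ : α * (α + d - 2) < Λ) :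
    ∃ c₁ c₂ : ℝ, 0 < c₁ ∧ c₁ < c₂ ∧ ∃ v : ℝ → ℝ,
      (∀ t ∈ Ioc (0 : ℝ) 1, 0 < v t) ∧ ContDiffOn ℝ 2 v (Ioo 0 1) ∧ ContinuousOn v (Icc 0 1) ∧
      (∀ t ∈ Ioo (0 : ℝ) 1, (1 - t ^ 2) * deriv (deriv v) t - (d - 1) * t * deriv v t
        + (μ / t ^ 2) * v t + Λ * v t = v t ^ p) ∧
      (∀ t ∈ Ioc (0 : ℝ) 1, c₁ * t ^ α < v t ∧ v t < c₂ * t ^ α) := by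
  obtain rfl : μ = α - α ^ 2 := by linarith
  obtain ⟨ε, hε, M, hM, v, v₁, v₂, hv, hcont, hbd⟩ :=
    exists_isAngularSolution_continuousOn_Icc hα hd hp hΛ
  have hεM : ε ≤ M := by simpa using nonempty_Icc.1 ⟨_, hbd 1 (by simp)⟩
  have hlt {t : ℝ} (ht : t ∈ Ioc (0 : ℝ) 1) : ε / 2 * t ^ α < v t ∧ v t < (M + 1) * t ^ α := by
    obtain ⟨hlo, hhi⟩ := hbd t (Ioc_subset_Icc_self ht)
    have htα := Real.rpow_pos_of_pos ht.1 α
    exact ⟨(mul_lt_mul_of_pos_right (half_lt_self hε) htα).trans_le hlo,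
      hhi.trans_lt (mul_lt_mul_of_pos_right (lt_add_one M) htα)⟩
  exact ⟨ε / 2, M + 1, half_pos hε, by linarith, v,
    fun t ht => (mul_pos (half_pos hε) (Real.rpow_pos_of_pos ht.1 α)).trans (hlt ht).1,
    hv.contDiffOn (by linarith), hcont, fun t ht => hv.deriv_eq ht, fun t ht => hlt ht⟩

section Exponents

theorem aPlus_pos (μ : ℝ) : 0 < aPlus μ :=
  add_pos_of_pos_of_nonneg one_half_pos (Real.sqrt_nonneg _)

theorem aPlus_sq_sub_aPlus_add {μ : ℝ} (hμ : μ ≤ 1 / 4) : aPlus μ ^ 2 - aPlus μ + μ = 0 := by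
  have := Real.sq_sqrt (sub_nonneg.2 hμ)
  rw [aPlus]
  linarith

theorem lt_Lam_of_lt_critical {n : ℕ} {α p : ℝ} (hnα : 0 < n - 2 + α) (hα : 0 ≤ α) (hp : 1 < p)
    (hpc : p < 1 + 2 / ((n : ℝ) - 2 + α)) :
    α * (α + n - 2) < Lam n (-(2 / (p - 1))) := by
  have hlt : (n : ℝ) - 2 + α < 2 / (p - 1) := by
    rw [lt_div_comm₀ hnα (sub_pos.2 hp)]
    linarith
  have : 0 < 2 / (p - 1) := by linarith
  rw [Lam]
  nlinarith [mul_pos (sub_pos.2 hlt) (add_pos_of_pos_of_nonneg this hα)]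

end Exponents

/-- for `1 < p < p_c` the angular equation has a positive solution
`v` with `c₁ t^{α₊} < v(t) < c₂ t^{α₊}` on `(0,1]`. -/
theorem stmt8 (n : ℕ) (hn : 2 ≤ n) (μ p : ℝ) (hμ : μ < 1 / 4) (hp1 : 1 < p)
    (hpc : p < 1 + 2 / ((n : ℝ) - 2 + aPlus μ)) :
    ∃ c₁ c₂ : ℝ, 0 < c₁ ∧ c₁ < c₂ ∧ ∃ v : ℝ → ℝ,
      (∀ t ∈ Set.Ioc (0 : ℝ) 1, 0 < v t) ∧
      ContDiffOn ℝ 2 v (Set.Ioo 0 1) ∧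
      ContinuousOn v (Set.Icc 0 1) ∧
      (∀ t ∈ Set.Ioo (0 : ℝ) 1,
        (1 - t ^ 2) * deriv (deriv v) t - ((n : ℝ) - 1) * t * deriv v t
          + (μ / t ^ 2) * v t + Lam n (-(2 / (p - 1))) * v t = v t ^ p) ∧
      (∀ t ∈ Set.Ioc (0 : ℝ) 1, c₁ * t ^ aPlus μ < v t ∧ v t < c₂ * t ^ aPlus μ) := by
  have hn' : (2 : ℝ) ≤ n := by exact_mod_cast hn
  exact stmt8_general n (aPlus μ) μ _ p (by linarith) (aPlus_pos μ)
    (aPlus_sq_sub_aPlus_add hμ.le) hp1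
    (lt_Lam_of_lt_critical (by linarith [aPlus_pos μ]) (aPlus_pos μ).le hp1 hpc)
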